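/- arXiv:2501.06506 — 2 statements merged into one kernel-verified Lean document; each statement's English description precedes it below -/
import Mathlib

section
/- Let n ≥ 1, m ≥ n, let E = {e_1, …, e_m} be a set of items, and for each i ∈ [n] let u_i : 2^E → ℤ_{≥0} be an additive utility function. Let h = min_{i∈[n]} u_i(E). Define an LSA instance of order 2m with valuations v_{ijk} = u_i({e_j}) if i ∈ [n] and j = k ≤ m; v_{ijk} = h if i ≥ n+1; and v_{ijk} = 0 otherwise. Then the maximum over complete allocations A of the egalitarian social welfare min_{i∈[2m]} v_i(A_i) equals the maximum over partitions (X_1, …, X_n) of E of min_{i∈[n]} u_i(X_i). -/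
/-! The valuation of an agent `i < n` only sees the diagonal triples `(i, j, j)` with `j < m`, and a
feasible allocation gives every such cell `(j, j)` to at most one agent. Reading off the owners of
these cells turns an allocation into a partition that is at least as good, which is one inequality
(`exists_partition_of_isPartialAlloc`).

For the other inequality, complete allocations are Latin squares of order `2m` (rows are items,
columns are rounds, symbols are agents), so it suffices to find a Latin square whose first `m`
diagonal entries are a prescribed sequence `X` with values among the first `m` symbols
(`exists_latin_of_diag`). Agents `i ≥ n` are then served by `h` alone, since they receive at least
one triple and `h` bounds the max-min value.

The Latin square is built from `m × m` blocks. The top left block has diagonal `X` and off-diagonal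
entry `m + (k - j mod m)`, so that the symbols `0, …, m` other than `X j` remain to be placed in
row `j`. The matrix `remMatrix X`, with rows `j < m` recording these remaining symbols and one
additional row recording the multiplicities of `X`, has all row and column sums equal to `m`, hence
is a sum of `m` permutation matrices `σ_k` by Hall's theorem (`exists_perm_decomposition`). The entry
`σ_k(j)` fills the top right block and, transposed, the bottom left one. The image of the additional
row under `σ_k` is the one symbol among `0, …, m` that row and column `m + k` still lack, and becomes
the `k`-th diagonal entry of the bottom right block, which is again circulant off the diagonal. -/

/-- A feasible partial allocation of an LSA instance of order `n`. -/
def IsPartialAlloc (n : ℕ) (A : Finset (Fin n × Fin n × Fin n)) : Prop :=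
  (∀ i j k k', (i, j, k) ∈ A → (i, j, k') ∈ A → k = k') ∧
  (∀ i j j' k, (i, j, k) ∈ A → (i, j', k) ∈ A → j = j') ∧
  (∀ i i' j k, (i, j, k) ∈ A → (i', j, k) ∈ A → i = i')

/-- A complete allocation: a feasible partial allocation with `n²` triples. -/
def IsCompleteAlloc (n : ℕ) (A : Finset (Fin n × Fin n × Fin n)) : Prop :=
  IsPartialAlloc n A ∧ A.card = n ^ 2

/-- `v_i(A_i)`: the total value agent `i` receives under allocation `A`. -/
def agentVal {n : ℕ} (v : Fin n → Fin n → Fin n → ℕ)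
    (A : Finset (Fin n × Fin n × Fin n)) (i : Fin n) : ℕ :=
  ∑ t ∈ A.filter (fun t => t.1 = i), v t.1 t.2.1 t.2.2

open Finset in
/-- By Hall's theorem, a matrix of naturals with constant positive row and column sums has a
permutation in its support. -/
lemma exists_perm_support {ι : Type*} [Fintype ι] [DecidableEq ι] (M : ι → ι → ℕ) (d : ℕ)
    (hd : 0 < d) (hr : ∀ i, ∑ j, M i j = d) (hc : ∀ j, ∑ i, M i j = d) :
    ∃ σ : Equiv.Perm ι, ∀ i, 0 < M i (σ i) := by
  obtain ⟨f, hf, hft⟩ := (Finset.all_card_le_biUnion_card_iff_exists_injective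
    (fun i => univ.filter (fun j => 0 < M i j))).1 (by
      intro s
      set T := s.biUnion (fun i => univ.filter (fun j => 0 < M i j)) with hT
      -- The rows in `s` carry weight `d * #s`, all of it inside the columns of `T`.
      have h1 : ∑ i ∈ s, ∑ j ∈ T, M i j = s.card * d := by
        rw [← smul_eq_mul, ← Finset.sum_const]
        refine Finset.sum_congr rfl fun i hi => ?_
        rw [← hr i]
        refine Finset.sum_subset (Finset.subset_univ _) fun j _ hj => ?_
        by_contra hne
        exact hj (Finset.mem_biUnion.2 ⟨i, hi, by simp; omega⟩)
      have h2 : ∑ i ∈ s, ∑ j ∈ T, M i j ≤ T.card * d := by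
        rw [Finset.sum_comm, ← smul_eq_mul, ← Finset.sum_const]
        refine Finset.sum_le_sum fun j _ => ?_
        rw [← hc j]
        exact Finset.sum_le_sum_of_subset (Finset.subset_univ _)
      exact Nat.le_of_mul_le_mul_right (h1 ▸ h2) hd)
  refine ⟨Equiv.ofBijective f (Finite.injective_iff_bijective.1 hf), fun i => ?_⟩
  simpa using hft i

open Finset in
/-- Integral Birkhoff theorem (equivalently, König's edge colouring theorem for regular bipartite
multigraphs): a matrix of naturals with all row and column sums `d` is a sum of `d` permutation
matrices. -/
lemma exists_perm_decomposition {ι : Type*} [Fintype ι] [DecidableEq ι] (d : ℕ) :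
    ∀ (M : ι → ι → ℕ), (∀ i, ∑ j, M i j = d) → (∀ j, ∑ i, M i j = d) →
    ∃ σ : Fin d → Equiv.Perm ι, ∀ i j, M i j = (univ.filter (fun k => σ k i = j)).card := by
  induction d with
  | zero =>
    intro M hr _
    refine ⟨fun k => k.elim0, fun i j => ?_⟩
    have := (Finset.sum_eq_zero_iff.1 (hr i)) j (mem_univ _)
    simp [this]
  | succ d ih =>
    intro M hr hc
    obtain ⟨σ, hσ⟩ := exists_perm_support M (d + 1) (Nat.succ_pos d) hr hc
    have key : ∀ i j, (M i j - if σ i = j then 1 else 0) + (if σ i = j then 1 else 0) = M i j := by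
      intro i j
      split_ifs with hij
      · have := hσ i
        rw [hij] at this
        omega
      · simp
    obtain ⟨τ, hτ⟩ := ih (fun i j => M i j - if σ i = j then 1 else 0)
      (by
        intro i
        have h1 := hr i
        rw [← Finset.sum_congr rfl fun j _ => key i j, Finset.sum_add_distrib] at h1
        simp only [Finset.sum_ite_eq, mem_univ, if_true, add_left_inj] at h1
        simpa using h1)
      (by
        intro j
        have h1 := hc j
        rw [← Finset.sum_congr rfl fun i _ => key i j, Finset.sum_add_distrib] at h1
        have h2 : ∑ i, (if σ i = j then 1 else 0) = 1 := by
          simp_rw [← Equiv.eq_symm_apply]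
          simp
        omega)
    refine ⟨Fin.cons σ τ, fun i j => ?_⟩
    rw [← key i j, hτ i j, Finset.card_filter, Finset.card_filter, Fin.sum_univ_succ]
    simp [add_comm]

/-- Row `some j` is the indicator of the symbols other than `X j`, where `none` plays the role of
the symbol `m`; row `none` records how often `X` takes each value. -/
def remMatrix {m : ℕ} (X : Fin m → Fin m) : Option (Fin m) → Option (Fin m) → ℕ
  | some j, s => if some (X j) = s then 0 else 1
  | none, s => ∑ j, if some (X j) = s then 1 else 0

lemma remMatrix_row {m : ℕ} (X : Fin m → Fin m) (i : Option (Fin m)) :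
    ∑ s, remMatrix X i s = m := by
  cases i with
  | none =>
    simp only [remMatrix]
    rw [Finset.sum_comm]
    simp
  | some j =>
    have h1 : ∑ s, (remMatrix X (some j) s + if some (X j) = s then 1 else 0) = m + 1 := by
      have : ∀ s, (remMatrix X (some j) s + if some (X j) = s then 1 else 0) = 1 := by
        intro s
        simp only [remMatrix]
        split_ifs <;> rfl
      simp [this]
    rw [Finset.sum_add_distrib] at h1
    simpa using h1

lemma remMatrix_col {m : ℕ} (X : Fin m → Fin m) (s : Option (Fin m)) :
    ∑ i, remMatrix X i s = m := by
  rw [Fintype.sum_option]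
  simp only [remMatrix]
  rw [← Finset.sum_add_distrib]
  have : ∀ j, ((if some (X j) = s then 1 else 0) + if some (X j) = s then 0 else 1) = 1 := by
    intro j
    split_ifs <;> rfl
  simp [this]

/-- The symbols `0, …, m` inside the symbol set `Fin m ⊕ Fin m`; the symbol `m` is `inr 0`. -/
def encSym {m : ℕ} [NeZero m] : Option (Fin m) → Fin m ⊕ Fin m
  | some s => Sum.inl s
  | none => Sum.inr 0

lemma encSym_injective {m : ℕ} [NeZero m] : Function.Injective (encSym (m := m)) := by
  intro a b hab
  cases a <;> cases b <;> simp_all [encSym]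

lemma encSym_ne {m : ℕ} [NeZero m] {c : Fin m} (hc : c ≠ 0) (o : Option (Fin m)) :
    encSym o ≠ Sum.inr c := by
  cases o
  · simpa [encSym] using hc.symm
  · simp [encSym]

/-- The Latin square in block form, given the diagonal `X` and the permutations `σ`. -/
def blockSquare {m : ℕ} [NeZero m] (X : Fin m → Fin m) (σ : Fin m → Equiv.Perm (Option (Fin m))) :
    Fin m ⊕ Fin m → Fin m ⊕ Fin m → Fin m ⊕ Fin m
  | Sum.inl j, Sum.inl k => if j = k then encSym (some (X j)) else Sum.inr (k - j)
  | Sum.inl j, Sum.inr k => encSym (σ k (some j))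
  | Sum.inr k, Sum.inl j => encSym (σ k (some j))
  | Sum.inr k, Sum.inr l => if k = l then encSym (σ k none) else Sum.inr (l - k)

/-- There is a Latin square of order `2m` whose first `m` diagonal entries are any prescribed
sequence in the first `m` symbols. -/
lemma exists_latin_of_diag {m : ℕ} [NeZero m] (X : Fin m → Fin m) :
    ∃ L : Fin m ⊕ Fin m → Fin m ⊕ Fin m → Fin m ⊕ Fin m,
      (∀ r, Function.Injective (L r)) ∧ (∀ c, Function.Injective (fun r => L r c)) ∧
      ∀ j, L (Sum.inl j) (Sum.inl j) = Sum.inl (X j) := by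
  obtain ⟨σ, hσ⟩ := exists_perm_decomposition m (remMatrix X) (remMatrix_row X) (remMatrix_col X)
  have hX : ∀ j k, σ k (some j) ≠ some (X j) := by
    intro j k hk
    have h0 := hσ (some j) (some (X j))
    simp only [remMatrix, if_true] at h0
    have := Finset.card_eq_zero.1 h0.symm
    exact Finset.notMem_empty k (this ▸ Finset.mem_filter.2 ⟨Finset.mem_univ _, hk⟩)
  have hinj : ∀ j k l, σ k (some j) = σ l (some j) → k = l := by
    intro j k l hkl
    have h0 := hσ (some j) (σ l (some j))
    have h1 : remMatrix X (some j) (σ l (some j)) ≤ 1 := by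
      simp only [remMatrix]
      split_ifs <;> omega
    rw [h0] at h1
    exact Finset.card_le_one.1 h1 k (by simp [hkl]) l (by simp)
  have hs : ∀ k {o o'}, σ k o = σ k o' → o = o' := fun k _ _ h => (σ k).injective h
  have hd : ∀ {a b : Fin m}, a ≠ b → ∀ o, encSym o ≠ Sum.inr (b - a) := fun hab o =>
    encSym_ne (sub_ne_zero.2 hab.symm) o
  have hd' : ∀ {a b : Fin m}, a ≠ b → ∀ o, Sum.inr (b - a) ≠ encSym o := fun hab o =>
    (hd hab o).symm
  refine ⟨blockSquare X σ, ?_, ?_, fun j => by simp [blockSquare, encSym]⟩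
  · rintro (r | r) (a | a) (b | b) hab <;> simp only [blockSquare] at hab
    · split_ifs at hab with h1 h2 h2
      · rw [← h1, ← h2]
      · exact (hd h2 _ hab).elim
      · exact (hd' h1 _ hab).elim
      · rw [sub_left_injective (Sum.inr_injective hab)]
    · split_ifs at hab with h1
      · exact (hX _ _ (encSym_injective hab).symm).elim
      · exact (hd' h1 _ hab).elim
    · split_ifs at hab with h1
      · exact (hX _ _ (encSym_injective hab)).elim
      · exact (hd h1 _ hab).elim
    · rw [hinj _ _ _ (encSym_injective hab)]
    · rw [Option.some_injective _ (hs _ (encSym_injective hab))]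
    · split_ifs at hab with h1
      · exact absurd (hs _ (encSym_injective hab)) (by simp)
      · exact (hd h1 _ hab).elim
    · split_ifs at hab with h1
      · exact absurd (hs _ (encSym_injective hab)) (by simp)
      · exact (hd' h1 _ hab).elim
    · split_ifs at hab with h1 h2 h2
      · rw [← h1, ← h2]
      · exact (hd h2 _ hab).elim
      · exact (hd' h1 _ hab).elim
      · rw [sub_left_injective (Sum.inr_injective hab)]
  · rintro (c | c) (a | a) (b | b) hab <;> simp only [blockSquare] at hab
    · split_ifs at hab with h1 h2 h2
      · rw [h1, h2]
      · exact (hd h2 _ hab).elim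
      · exact (hd' h1 _ hab).elim
      · rw [sub_right_injective (Sum.inr_injective hab)]
    · split_ifs at hab with h1
      · subst h1
        exact (hX _ _ (encSym_injective hab).symm).elim
      · exact (hd' h1 _ hab).elim
    · split_ifs at hab with h1
      · subst h1
        exact (hX _ _ (encSym_injective hab)).elim
      · exact (hd h1 _ hab).elim
    · rw [hinj _ _ _ (encSym_injective hab)]
    · rw [Option.some_injective _ (hs _ (encSym_injective hab))]
    · split_ifs at hab with h1
      · subst h1
        exact absurd (hs _ (encSym_injective hab)) (by simp)
      · exact (hd h1 _ hab).elim
    · split_ifs at hab with h1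
      · subst h1
        exact absurd (hs _ (encSym_injective hab)) (by simp)
      · exact (hd' h1 _ hab).elim
    · split_ifs at hab with h1 h2 h2
      · rw [h1, h2]
      · exact (hd h2 _ hab).elim
      · exact (hd' h1 _ hab).elim
      · rw [sub_right_injective (Sum.inr_injective hab)]

/-- `exists_latin_of_diag` in terms of complete allocations: the entry of the square in row `j` and
column `k` is the agent receiving item `j` in round `k`. Moreover every agent receives a triple. -/
lemma exists_isCompleteAlloc {m : ℕ} [NeZero m] (X : Fin m → Fin m) :
    ∃ A, IsCompleteAlloc (2 * m) A ∧
      (∀ j : Fin m, ((⟨X j, by omega⟩, ⟨j, by omega⟩, ⟨j, by omega⟩) :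
        Fin (2 * m) × Fin (2 * m) × Fin (2 * m)) ∈ A) ∧
      ∀ i, ∃ t ∈ A, t.1 = i := by
  obtain ⟨L, hrow, hcol, hdiag⟩ := exists_latin_of_diag X
  let e : Fin m ⊕ Fin m ≃ Fin (2 * m) := finSumFinEquiv.trans (finCongr (two_mul m).symm)
  have he : ∀ j : Fin m, e (Sum.inl j) = ⟨j, by omega⟩ := fun j => by
    ext
    simp [e]
  let f : Fin (2 * m) × Fin (2 * m) → Fin (2 * m) × Fin (2 * m) × Fin (2 * m) :=
    fun p => (e (L (e.symm p.1) (e.symm p.2)), p.1, p.2)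
  have hmem : ∀ i j k, (i, j, k) ∈ Finset.univ.image f ↔ e (L (e.symm j) (e.symm k)) = i := by
    intro i j k
    simp [f]
  refine ⟨Finset.univ.image f, ⟨⟨?_, ?_, ?_⟩, ?_⟩, ?_, ?_⟩
  · intro i j k k' h1 h2
    rw [hmem] at h1 h2
    exact e.symm.injective (hrow _ (e.injective (h1.trans h2.symm)))
  · intro i j j' k h1 h2
    rw [hmem] at h1 h2
    exact e.symm.injective (hcol _ (e.injective (h1.trans h2.symm)))
  · intro i i' j k h1 h2
    rw [hmem] at h1 h2
    exact h1.symm.trans h2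
  · rw [Finset.card_image_of_injective]
    · simp [sq]
    · rintro ⟨a, b⟩ ⟨c, d⟩ hab
      simp only [f, Prod.mk.injEq] at hab
      simp [hab.2.1, hab.2.2]
  · intro j
    rw [hmem, ← he j, ← he (X j)]
    simp [hdiag]
  · intro i
    have : Function.Surjective (L (Sum.inl 0)) := Finite.injective_iff_surjective.1 (hrow _)
    obtain ⟨c, hc⟩ := this (e.symm i)
    exact ⟨f (e (Sum.inl 0), e c), Finset.mem_image_of_mem _ (Finset.mem_univ _), by simp [f, hc]⟩

/-- Each item `j` goes to the agent below `n` that receives it in round `j`, and to an arbitrary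
agent if there is none. -/
lemma exists_partition_of_isPartialAlloc {n m : ℕ} (hn : 1 ≤ n) (hnm : n ≤ m)
    (u : Fin n → Fin m → ℕ) (h : ℕ) (v : Fin (2 * m) → Fin (2 * m) → Fin (2 * m) → ℕ)
    (hv : ∀ i j k, v i j k =
      if hi : (i : ℕ) < n then
        if hjk : (j : ℕ) = (k : ℕ) ∧ (j : ℕ) < m then u ⟨i, hi⟩ ⟨j, hjk.2⟩ else 0
      else h)
    (A : Finset (Fin (2 * m) × Fin (2 * m) × Fin (2 * m))) (hA : IsPartialAlloc (2 * m) A) :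
    ∃ X : Fin m → Fin n, ∀ i : Fin n, agentVal v A ⟨i, by omega⟩ ≤
      ∑ j ∈ Finset.univ.filter (fun j => X j = i), u i j := by
  classical
  let own (i : Fin n) (j : Fin m) : Prop :=
    ((⟨i, by omega⟩, ⟨j, by omega⟩, ⟨j, by omega⟩) :
      Fin (2 * m) × Fin (2 * m) × Fin (2 * m)) ∈ A
  let X : Fin m → Fin n := fun j => if hj : ∃ i, own i j then hj.choose else ⟨0, hn⟩
  have hX : ∀ i j, own i j → X j = i := by
    intro i j hij
    have hj : ∃ i, own i j := ⟨i, hij⟩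
    have h1 : X j = hj.choose := dif_pos hj
    have h2 := hA.2.2 _ _ _ _ hj.choose_spec hij
    rw [h1]
    ext
    simpa using h2
  refine ⟨X, fun i => ?_⟩
  let g : Fin m → Fin (2 * m) × Fin (2 * m) × Fin (2 * m) := fun j =>
    (⟨i, by omega⟩, ⟨j, by omega⟩, ⟨j, by omega⟩)
  have hg : Function.Injective g := by
    intro a b hab
    simp only [g, Prod.mk.injEq, Fin.mk.injEq] at hab
    exact Fin.ext hab.2.1
  have hgv : ∀ j, v (g j).1 (g j).2.1 (g j).2.2 = u i j := by
    intro j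
    simp [g, hv]
  simp_rw [← hgv]
  rw [← Finset.sum_image (f := fun t => v t.1 t.2.1 t.2.2) (g := g) hg.injOn]
  refine Finset.sum_le_sum_of_ne_zero ?_
  rintro ⟨a, b, c⟩ ht hne
  obtain ⟨htA, rfl⟩ := Finset.mem_filter.1 ht
  rw [hv] at hne
  have hbc : (b : ℕ) = (c : ℕ) ∧ (b : ℕ) < m := by
    by_contra hbc
    simp [hbc] at hne
  obtain rfl : b = c := Fin.ext hbc.1
  exact Finset.mem_image.2 ⟨⟨b, hbc.2⟩, Finset.mem_filter.2 ⟨Finset.mem_univ _, hX _ _ htA⟩, rfl⟩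

/-- reduction from max-min fair allocation. `u i j` is agent `i`'s
(additive) utility for item `e_j`, `h = min_i u_i(E)` (stated as `IsLeast`),
and the LSA instance of order `2m` has `v i j k = u i (e_j)` when `i ∈ [n]` and
`j = k ∈ [m]` (0-based indices below `n`, resp. `m`), `v i j k = h` when
`i ≥ n+1`, and `0` otherwise. The maximum egalitarian social welfare over
complete allocations equals the max-min value over partitions `(X_1,…,X_n)` of
`E` (encoded as functions `X : Fin m → Fin n` assigning each item to an agent). -/
theorem stmt_11 (n m : ℕ) (hn : 1 ≤ n) (hnm : n ≤ m)
    (u : Fin n → Fin m → ℕ) (h : ℕ)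
    (hh : IsLeast {w : ℕ | ∃ i : Fin n, w = ∑ j, u i j} h)
    (v : Fin (2 * m) → Fin (2 * m) → Fin (2 * m) → ℕ)
    (hv : ∀ i j k, v i j k =
      if hi : (i : ℕ) < n then
        if hjk : (j : ℕ) = (k : ℕ) ∧ (j : ℕ) < m then u ⟨i, hi⟩ ⟨j, hjk.2⟩ else 0
      else h) :
    (⨆ A : {A : Finset (Fin (2 * m) × Fin (2 * m) × Fin (2 * m)) //
        IsCompleteAlloc (2 * m) A}, ⨅ i, agentVal v A.1 i)
    = ⨆ X : Fin m → Fin n,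
        ⨅ i, ∑ j ∈ Finset.univ.filter (fun j => X j = i), u i j := by
  classical
  have : NeZero m := ⟨by omega⟩
  have : Nonempty (Fin n) := ⟨⟨0, hn⟩⟩
  have : Nonempty (Fin (2 * m)) := ⟨⟨0, by omega⟩⟩
  apply le_antisymm
  · refine ciSup_le' ?_
    rintro ⟨A, hA⟩
    obtain ⟨X, hX⟩ := exists_partition_of_isPartialAlloc hn hnm u h v hv A hA.1
    refine le_trans ?_ (le_ciSup (Set.finite_range _).bddAbove X)
    exact le_ciInf fun i => (ciInf_le (OrderBot.bddBelow _) _).trans (hX i)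
  · refine ciSup_le' fun X => ?_
    obtain ⟨A, hA, hdiag, hne⟩ := exists_isCompleteAlloc (fun j => Fin.castLE hnm (X j))
    refine le_trans ?_ (le_ciSup (Set.finite_range _).bddAbove ⟨A, hA⟩)
    refine le_ciInf fun i => ?_
    by_cases hi : (i : ℕ) < n
    · refine (ciInf_le (OrderBot.bddBelow _) ⟨i, hi⟩).trans ?_
      let g : Fin m → Fin (2 * m) × Fin (2 * m) × Fin (2 * m) := fun j =>
        (i, ⟨j, by omega⟩, ⟨j, by omega⟩)
      have hg : Function.Injective g := by
        intro a b hab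
        simp only [g, Prod.mk.injEq, Fin.mk.injEq] at hab
        exact Fin.ext hab.2.1
      have hgv : ∀ j, v (g j).1 (g j).2.1 (g j).2.2 = u ⟨i, hi⟩ j := by
        intro j
        simp [g, hv, hi]
      simp_rw [← hgv]
      rw [← Finset.sum_image (f := fun t => v t.1 t.2.1 t.2.2) (g := g) hg.injOn]
      refine Finset.sum_le_sum_of_subset fun t ht => ?_
      obtain ⟨j, hj, rfl⟩ := Finset.mem_image.1 ht
      have hj' := (Finset.mem_filter.1 hj).2
      refine Finset.mem_filter.2 ⟨?_, rfl⟩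
      have := hdiag j
      simpa [hj', g] using this
    · -- One triple is worth `h` to such an agent, and `h` bounds the minimum over any partition.
      obtain ⟨i₀, hi₀⟩ := hh.1
      obtain ⟨t, htA, hti⟩ := hne i
      calc _ ≤ _ := ciInf_le (OrderBot.bddBelow _) i₀
        _ ≤ ∑ j, u i₀ j := Finset.sum_le_sum_of_subset (Finset.filter_subset _ _)
        _ = v t.1 t.2.1 t.2.2 := by rw [hv, hti, dif_neg hi, hi₀]
        _ ≤ agentVal v A i := Finset.single_le_sum (f := fun t => v t.1 t.2.1 t.2.2)
            (fun _ _ => Nat.zero_le _) (Finset.mem_filter.2 ⟨htA, hti⟩)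
end

section
/- Let m ≥ 3 and let a_1, …, a_{3m}, T be positive integers with T/4 < a_j < T/2 for all j and ∑_{j=1}^{3m} a_j = mT. Define an LSA instance of order n = 6m with identical valuations: v_{ijk} = a_j if j = k ≤ 3m; otherwise v_{ijk} = T if j = 3m−1 and k ≤ 2m+1; otherwise v_{ijk} = T if j = 3m and k ≤ 3m−1; otherwise v_{ijk} = 0. Then there exists a complete allocation A with egalitarian social welfare min_{i∈[6m]} v_i(A_i) ≥ T if and only if there exists a partition of [3m] into m triples S_1, …, S_m with ∑_{j∈S_i} a_j = T for each i ∈ [m]. -/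
/-! ### Extending a partial Latin array to a Latin square -/

open Classical in
/-- A `d`-regular bipartite relation decomposes into `d` pairwise disjoint perfect matchings
`g 0, …, g (d - 1)`: Hall's theorem provides one matching, and deleting it leaves a
`(d - 1)`-regular relation. -/
theorem exists_matchings_of_regular {α β : Type} [Fintype α] [Fintype β] (d : ℕ) :
    ∀ R : α → β → Prop,
      (∀ x, {y | R x y}.ncard = d) → (∀ y, {x | R x y}.ncard = d) →
      ∃ g : Fin d → α → β, (∀ t x, R x (g t x)) ∧ (∀ t, Function.Injective (g t)) ∧
        ∀ x, Function.Injective (fun t => g t x) := by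
  induction d with
  | zero =>
    intro R _ _
    exact ⟨fun t => t.elim0, fun t => t.elim0, fun t => t.elim0, fun x t => t.elim0⟩
  | succ d ih =>
    intro R hα' hβ'
    have hα : ∀ x, (Finset.univ.filter (fun y => R x y)).card = d + 1 := by
      intro x; rw [← hα' x, ← Set.ncard_coe_finset]; simp
    have hβ : ∀ y, (Finset.univ.filter (fun x => R x y)).card = d + 1 := by
      intro y; rw [← hβ' y, ← Set.ncard_coe_finset]; simp
    -- Hall's condition: the `(d + 1) * #A` edges at `A` end in its neighbourhood, each vertex of
    -- which receives at most `d + 1` of them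
    have hall : ∀ A : Finset α,
        A.card ≤ (Finset.univ.filter (fun y => ∃ x ∈ A, R x y)).card := by
      intro A
      have := Finset.card_mul_le_card_mul (s := A)
        (t := Finset.univ.filter (fun y => ∃ x ∈ A, R x y)) (m := d + 1) (n := d + 1) R
        (by
          intro x hx
          rw [← hα x]
          apply Finset.card_le_card
          intro y hy
          simp only [Finset.mem_filter, Finset.mem_univ, true_and,
            Finset.mem_bipartiteAbove] at hy ⊢
          exact ⟨⟨x, hx, hy⟩, hy⟩)
        (by
          intro y _
          rw [← hβ y]
          apply Finset.card_le_card
          intro x hx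
          simp only [Finset.mem_filter, Finset.mem_univ, true_and,
            Finset.mem_bipartiteBelow] at hx ⊢
          exact hx.2)
      exact Nat.le_of_mul_le_mul_right this (Nat.succ_pos d)
    obtain ⟨h, hinj, hR⟩ := (Fintype.all_card_le_filter_rel_iff_exists_injective R).1 hall
    have hcard : Fintype.card α = Fintype.card β := by
      have := Finset.card_mul_eq_card_mul (s := (Finset.univ : Finset α))
        (t := (Finset.univ : Finset β)) (m := d + 1) (n := d + 1) R
        (fun x _ => hα x) (fun y _ => hβ y)
      exact Nat.eq_of_mul_eq_mul_right (Nat.succ_pos d) this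
    have hbij : Function.Bijective h :=
      (Fintype.bijective_iff_injective_and_card h).2 ⟨hinj, hcard⟩
    obtain ⟨g, g1, g2, g3⟩ := ih (fun x y => R x y ∧ y ≠ h x)
      (by
        intro x
        have : {y | R x y ∧ y ≠ h x} = {y | R x y} \ {h x} := rfl
        rw [this, Set.ncard_sdiff_singleton_of_mem (s := {y | R x y}) (hR x), hα']; rfl)
      (by
        intro y
        obtain ⟨x₀, rfl⟩ := hbij.2 y
        have : {x | R x (h x₀) ∧ h x₀ ≠ h x} = {x | R x (h x₀)} \ {x₀} := by
          ext y; simp [hinj.eq_iff, eq_comm]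
        rw [this, Set.ncard_sdiff_singleton_of_mem (s := {x | R x (h x₀)}) (hR x₀), hβ']; rfl)
    refine ⟨Fin.cons h g, ?_, ?_, ?_⟩
    · intro t x
      refine Fin.cases ?_ (fun t => ?_) t
      · exact hR x
      · exact (g1 t x).1
    · intro t
      refine Fin.cases ?_ (fun t => ?_) t
      · exact hinj
      · exact g2 t
    · intro x t t'
      refine Fin.cases ?_ (fun t => ?_) t <;> refine Fin.cases ?_ (fun t' => ?_) t'
      · intro _; rfl
      · intro e; exact absurd e.symm (g1 t' x).2
      · intro e; exact absurd e (g1 t x).2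
      · intro e; exact congrArg Fin.succ (g3 x e)

/-- In a Latin array, the rows containing `s` are as many as the columns containing `s`: both are as
many as the cells containing `s`. -/
theorem card_rows_eq_card_cols {α β S : Type} (L : α → β → S)
    (hrow : ∀ r, Function.Injective (L r)) (hcol : ∀ c, Function.Injective (fun r => L r c))
    (s : S) :
    {r | ∃ c, L r c = s}.ncard = {c | ∃ r, L r c = s}.ncard := by
  have h1 : Prod.fst '' {p : α × β | L p.1 p.2 = s} = {r | ∃ c, L r c = s} := by ext; simp
  have h2 : Prod.snd '' {p : α × β | L p.1 p.2 = s} = {c | ∃ r, L r c = s} := by ext; simp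
  rw [← h1, ← h2, Set.InjOn.ncard_image, Set.InjOn.ncard_image]
  · rintro ⟨r, c⟩ (h : L r c = s) ⟨r', c'⟩ (h' : L r' c' = s) (rfl : c = c')
    exact Prod.ext (hcol c (h.trans h'.symm)) rfl
  · rintro ⟨r, c⟩ (h : L r c = s) ⟨r', c'⟩ (h' : L r' c' = s) (rfl : r = r')
    exact Prod.ext rfl (hrow r (h.trans h'.symm))

theorem card_not_exists_add {α β : Type} [Fintype β] (p : α → β → Prop) :
    {y | ∀ x, ¬ p x y}.ncard + {y | ∃ x, p x y}.ncard = Fintype.card β := by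
  have h := Set.ncard_add_ncard_compl {y | ∃ x, p x y}
  have h' : {y | ∃ x, p x y}ᶜ = {y | ∀ x, ¬ p x y} := by ext; simp
  rw [h', Nat.card_eq_fintype_card] at h
  omega

theorem card_symbols_of_injective {γ S : Type} [Fintype γ] (l : γ → S)
    (hl : Function.Injective l) : {s | ∃ c, l c = s}.ncard = Fintype.card γ := by
  have : {s | ∃ c, l c = s} = l '' Set.univ := by ext; simp
  rw [this, Set.ncard_image_of_injective _ hl, Set.ncard_univ, Nat.card_eq_fintype_card]

theorem card_sum_set {α β : Type} [Fintype α] [Fintype β] (p : α → Prop) (q : β → Prop) :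
    {x : α ⊕ β | Sum.elim p q x}.ncard = {x | p x}.ncard + {x | q x}.ncard := by
  have : {x : α ⊕ β | Sum.elim p q x} = Sum.inl '' {x | p x} ∪ Sum.inr '' {x | q x} := by
    ext (x | x) <;> simp
  rw [this, Set.ncard_union_eq, Set.ncard_image_of_injective _ Sum.inl_injective,
    Set.ncard_image_of_injective _ Sum.inr_injective]
  rw [Set.disjoint_left]
  rintro _ ⟨x, _, rfl⟩ ⟨y, _, e⟩
  exact Sum.inr_ne_inl e

/-- The case of Ryser's theorem where no counting condition is needed: a `k × k` Latin array on
`2k` symbols is the top left block of a Latin square of order `2k`. -/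
theorem exists_latin_completion (k : ℕ) {S : Type} [Fintype S] (hS : Fintype.card S = k + k)
    (L : Fin k → Fin k → S)
    (hrow : ∀ r, Function.Injective (L r)) (hcol : ∀ c, Function.Injective (fun r => L r c)) :
    ∃ M : Fin k ⊕ Fin k → Fin k ⊕ Fin k → S,
      (∀ r c, M (Sum.inl r) (Sum.inl c) = L r c) ∧
      (∀ r, Function.Injective (M r)) ∧ (∀ c, Function.Injective (fun r => M r c)) := by
  -- Joining each row to its missing symbols gives symbols of unequal degrees. Adding the columns
  -- as further vertices, each joined to the symbols it does contain, makes the graph regular.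
  obtain ⟨g, g1, g2, g3⟩ := exists_matchings_of_regular (α := Fin k ⊕ Fin k) (β := S) k
    (fun x s => Sum.elim (fun r => ∀ c, ¬ L r c = s) (fun c => ∃ r, L r c = s) x)
    (by
      rintro (r | c)
      · have h1 := card_not_exists_add (fun c s => L r c = s)
        have h2 := card_symbols_of_injective (L r) (hrow r)
        simp only [Fintype.card_fin, Sum.elim_inl] at h1 h2 ⊢
        omega
      · have h2 := card_symbols_of_injective _ (hcol c)
        simpa only [Fintype.card_fin, Sum.elim_inr] using h2)
    (by
      intro s
      have h1 := card_not_exists_add (fun c r => L r c = s)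
      have h2 := card_rows_eq_card_cols L hrow hcol s
      rw [card_sum_set]
      simp only [Fintype.card_fin] at h1 h2 ⊢
      omega)
  -- On the row vertices, the `k` matchings are the `k` missing columns of the first `k` rows.
  let L₁ : Fin k → Fin k ⊕ Fin k → S := fun r => Sum.elim (L r) (fun t => g t (Sum.inl r))
  have hrow₁ : ∀ r, Function.Injective (L₁ r) := by
    rintro r (c | t) (c' | t') e
    · exact congrArg Sum.inl (hrow r e)
    · exact absurd e (g1 t' (Sum.inl r) c)
    · exact absurd e.symm (g1 t (Sum.inl r) c')
    · exact congrArg Sum.inr (g3 (Sum.inl r) e)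
  have hcol₁ : ∀ c, Function.Injective (fun r => L₁ r c) := by
    rintro (c | t) r r' e
    · exact hcol c e
    · exact Sum.inl_injective (g2 t e)
  -- The `k` missing rows come from the columns joined to the symbols they still lack.
  obtain ⟨h, h1, h2, h3⟩ := exists_matchings_of_regular (α := Fin k ⊕ Fin k) (β := S) k
    (fun c s => ∀ r, ¬ L₁ r c = s)
    (by
      intro c
      have h1 := card_not_exists_add (fun r s => L₁ r c = s)
      have h2 := card_symbols_of_injective _ (hcol₁ c)
      simp only [Fintype.card_fin] at h1 h2 ⊢
      omega)
    (by
      intro s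
      have h1 := card_not_exists_add (fun r c => L₁ r c = s)
      have h2 := card_rows_eq_card_cols L₁ hrow₁ hcol₁ s
      -- a full row is a bijection onto the symbols, so every row contains `s`
      have h3 : {r | ∃ c, L₁ r c = s}.ncard = k := by
        rw [show {r | ∃ c, L₁ r c = s} = Set.univ from Set.eq_univ_of_forall fun r =>
          ((Fintype.bijective_iff_injective_and_card (L₁ r)).2 ⟨hrow₁ r, by simp [hS]⟩).2 s]
        simp [Set.ncard_univ]
      simp only [Fintype.card_fin, Fintype.card_sum] at h1 h2 h3 ⊢
      omega)
  refine ⟨fun x c => Sum.elim (fun r => L₁ r c) (fun t => h t c) x, fun r c => rfl, ?_, ?_⟩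
  · rintro (r | t)
    · exact hrow₁ r
    · exact h2 t
  · rintro c (r | t) (r' | t') e
    · exact congrArg Sum.inl (hcol₁ c e)
    · exact absurd e (h1 t' c r)
    · exact absurd e.symm (h1 t c r')
    · exact congrArg Sum.inr (h3 c e)

open Classical in
/-- Greedy colouring: a proper colouring of the vertices in `S₀` extends to all vertices when every
vertex has fewer neighbours than there are colours. -/
theorem exists_greedy_extension {V C : Type} [Fintype V] [Fintype C] (adj : V → V → Prop)
    (hsymm : ∀ x y, adj x y → adj y x) (hirr : ∀ x, ¬ adj x x)
    (hdeg : ∀ x, {y | adj x y}.ncard < Fintype.card C)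
    (S₀ : Set V) (c₀ : V → C) (h₀ : ∀ x ∈ S₀, ∀ y ∈ S₀, adj x y → c₀ x ≠ c₀ y) :
    ∃ c : V → C, (∀ x ∈ S₀, c x = c₀ x) ∧ ∀ x y, adj x y → c x ≠ c y := by
  have key : ∀ S : Finset V, ∃ c : V → C, (∀ x ∈ S₀, c x = c₀ x) ∧
      ∀ x y, (x ∈ S₀ ∨ x ∈ S) → (y ∈ S₀ ∨ y ∈ S) → adj x y → c x ≠ c y := by
    intro S
    induction S using Finset.induction_on with
    | empty => exact ⟨c₀, fun _ _ => rfl, fun x y hx hy => h₀ x (by simpa using hx) y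
        (by simpa using hy)⟩
    | insert u S hu ih =>
      obtain ⟨c, hc, hp⟩ := ih
      by_cases hu0 : u ∈ S₀
      · refine ⟨c, hc, fun x y hx hy => hp x y ?_ ?_⟩
        · rcases hx with hx | hx
          · exact Or.inl hx
          · rcases Finset.mem_insert.1 hx with rfl | hx
            exacts [Or.inl hu0, Or.inr hx]
        · rcases hy with hx | hx
          · exact Or.inl hx
          · rcases Finset.mem_insert.1 hx with rfl | hx
            exacts [Or.inl hu0, Or.inr hx]
      · obtain ⟨z, hz⟩ : ∃ z : C, z ∉ (Finset.univ.filter (fun y => adj u y)).image c := by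
          by_contra! hcon
          have h1 := Finset.card_le_card
            (fun z _ => hcon z :
              (Finset.univ : Finset C) ⊆ (Finset.univ.filter (fun y => adj u y)).image c)
          have h2 := Finset.card_image_le (s := Finset.univ.filter (fun y => adj u y)) (f := c)
          have h3 := hdeg u
          have h4 : (Finset.univ.filter (fun y => adj u y)).card = {y | adj u y}.ncard := by
            rw [← Set.ncard_coe_finset]; simp
          rw [Finset.card_univ] at h1
          omega
        have hz' : ∀ y, adj u y → c y ≠ z := by
          intro y hy e
          exact hz (Finset.mem_image.2 ⟨y, by simpa using hy, e⟩)
        refine ⟨Function.update c u z, ?_, ?_⟩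
        · intro x hx
          rw [Function.update_of_ne (by rintro rfl; exact hu0 hx)]
          exact hc x hx
        · intro x y hx hy hxy
          by_cases hxu : x = u
          · subst hxu
            have : y ≠ x := by rintro rfl; exact hirr _ hxy
            rw [Function.update_self, Function.update_of_ne this]
            exact (hz' y hxy).symm
          · by_cases hyu : y = u
            · subst hyu
              rw [Function.update_self, Function.update_of_ne hxu]
              exact hz' x (hsymm _ _ hxy)
            · rw [Function.update_of_ne hxu, Function.update_of_ne hyu]
              exact hp x y (by simpa [hxu] using hx) (by simpa [hyu] using hy) hxy
  obtain ⟨c, hc, hp⟩ := key Finset.univ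
  exact ⟨c, hc, fun x y => hp x y (by simp) (by simp)⟩

/-- A proper partial filling of a `k × k` array with `2k` symbols extends to a Latin square of
order `2k`: the other cells of the `k × k` block can be filled greedily, since each of them shares a
line with only `2(k - 1)` other cells. -/
theorem exists_latin_of_partial (k : ℕ) {S : Type} [Fintype S]
    (hS : Fintype.card S = k + k) (P : Set (Fin k × Fin k)) (c₀ : Fin k × Fin k → S)
    (h₀ : ∀ x ∈ P, ∀ y ∈ P, x ≠ y → (x.1 = y.1 ∨ x.2 = y.2) → c₀ x ≠ c₀ y) :
    ∃ M : Fin k ⊕ Fin k → Fin k ⊕ Fin k → S,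
      (∀ x ∈ P, M (Sum.inl x.1) (Sum.inl x.2) = c₀ x) ∧
      (∀ r, Function.Injective (M r)) ∧ (∀ c, Function.Injective (fun r => M r c)) := by
  classical
  obtain ⟨c, hc, hp⟩ := exists_greedy_extension
    (fun x y : Fin k × Fin k => x ≠ y ∧ (x.1 = y.1 ∨ x.2 = y.2))
    (fun x y h => ⟨h.1.symm, h.2.imp Eq.symm Eq.symm⟩) (fun x h => h.1 rfl)
    (by
      rintro ⟨r, c⟩
      rw [hS]
      have hsub : {y : Fin k × Fin k | (r, c) ≠ y ∧ ((r, c).1 = y.1 ∨ (r, c).2 = y.2)} ⊆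
          (fun c' => (r, c')) '' {c}ᶜ ∪ (fun r' => (r', c)) '' {r}ᶜ := by
        rintro ⟨r', c'⟩ ⟨hne, e | e⟩
        · obtain rfl : r = r' := e
          exact Or.inl ⟨c', fun e => hne (by rw [Set.mem_singleton_iff.1 e]), rfl⟩
        · obtain rfl : c = c' := e
          exact Or.inr ⟨r', fun e => hne (by rw [Set.mem_singleton_iff.1 e]), rfl⟩
      have h1 := Set.ncard_le_ncard hsub
      have h2 := Set.ncard_union_le ((fun c' => (r, c')) '' {c}ᶜ) ((fun r' => (r', c)) '' {r}ᶜ)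
      have h3 := Set.ncard_image_le (f := fun c' => (r, c')) (Set.toFinite {c}ᶜ)
      have h4 := Set.ncard_image_le (f := fun r' => (r', c)) (Set.toFinite {r}ᶜ)
      have h5 := Set.ncard_add_ncard_compl {c}
      have h6 := Set.ncard_add_ncard_compl {r}
      simp only [Set.ncard_singleton, Nat.card_eq_fintype_card, Fintype.card_fin] at h5 h6
      omega)
    P c₀ (fun x hx y hy h => h₀ x hx y hy h.1 h.2)
  obtain ⟨M, h1, h2, h3⟩ := exists_latin_completion k hS (fun r c' => c (r, c'))
    (by
      intro r c₁ c₂ e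
      by_contra hne
      exact hp (r, c₁) (r, c₂) ⟨by simpa using hne, Or.inl rfl⟩ e)
    (by
      intro c' r₁ r₂ e
      by_contra hne
      exact hp (r₁, c') (r₂, c') ⟨by simpa using hne, Or.inr rfl⟩ e)
  exact ⟨M, fun x hx => by rw [h1]; exact hc x hx, h2, h3⟩

/-! ### Allocations and the value of an agent -/

/-- The allocation that gives item `j` in round `k` to agent `g j k`. -/
def allocOf {n : ℕ} (g : Fin n → Fin n → Fin n) : Finset (Fin n × Fin n × Fin n) :=
  Finset.univ.image (fun p : Fin n × Fin n => (g p.1 p.2, p.1, p.2))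

theorem mem_allocOf {n : ℕ} (g : Fin n → Fin n → Fin n) (i j k : Fin n) :
    (i, j, k) ∈ allocOf g ↔ g j k = i := by
  simp [allocOf, Prod.ext_iff]

theorem isCompleteAlloc_allocOf {n : ℕ} (g : Fin n → Fin n → Fin n)
    (hrow : ∀ j, Function.Injective (g j)) (hcol : ∀ k, Function.Injective (fun j => g j k)) :
    IsCompleteAlloc n (allocOf g) := by
  refine ⟨⟨?_, ?_, ?_⟩, ?_⟩
  · intro i j k k' h h'
    rw [mem_allocOf] at h h'
    exact hrow j (h.trans h'.symm)
  · intro i j j' k h h'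
    rw [mem_allocOf] at h h'
    exact hcol k (h.trans h'.symm)
  · intro i i' j k h h'
    rw [mem_allocOf] at h h'
    exact h.symm.trans h'
  · rw [allocOf, Finset.card_image_of_injective _ (fun p q h => (Prod.ext_iff.1 h).2)]
    simp [sq]

/-- The `n ^ 2` triples of a complete allocation have distinct (item, round) pairs, so every such
pair is used. -/
theorem exists_eq_allocOf {n : ℕ} {A : Finset (Fin n × Fin n × Fin n)}
    (hA : IsCompleteAlloc n A) : ∃ g : Fin n → Fin n → Fin n, A = allocOf g := by
  obtain ⟨⟨_, _, h3⟩, hcard⟩ := hA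
  have hinj : Set.InjOn (Prod.snd : Fin n × Fin n × Fin n → Fin n × Fin n) A := by
    rintro ⟨i, j, k⟩ h ⟨i', j', k'⟩ h' e
    simp only [Prod.mk.injEq] at e
    obtain ⟨rfl, rfl⟩ := e
    rw [h3 i i' j k h h']
  have himg : A.image Prod.snd = Finset.univ := by
    rw [← Finset.card_eq_iff_eq_univ, Finset.card_image_of_injOn hinj, hcard]
    simp [sq]
  have hex : ∀ j k, ∃ i, (i, j, k) ∈ A := by
    intro j k
    have : (j, k) ∈ A.image Prod.snd := by rw [himg]; simp
    obtain ⟨⟨i, p⟩, h, e⟩ := Finset.mem_image.1 this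
    exact ⟨i, by rw [← show p = (j, k) from e]; exact h⟩
  choose g hg using hex
  refine ⟨g, ?_⟩
  ext ⟨i, j, k⟩
  rw [mem_allocOf]
  exact ⟨fun h => h3 _ _ _ _ (hg j k) h, fun h => h ▸ hg j k⟩

theorem agentVal_allocOf {n : ℕ} (v : Fin n → Fin n → Fin n → ℕ) (g : Fin n → Fin n → Fin n)
    (i : Fin n) :
    agentVal v (allocOf g) i = ∑ p : Fin n × Fin n, if g p.1 p.2 = i then v i p.1 p.2 else 0 := by
  rw [agentVal, Finset.sum_filter, allocOf,
    Finset.sum_image (fun p _ q _ h => (Prod.ext_iff.1 h).2)]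
  refine Finset.sum_congr rfl fun p _ => ?_
  by_cases h : g p.1 p.2 = i
  · simp [h]
  · simp [h]

/-- The cells (item, round) of positive value, all with item and round among the first `3m`: `inl j`
is the diagonal cell of value `a j`, and `inr q` for `q < 5m` enumerates the cells of value `T`, the
first `2m + 1` of them for item `3m - 2` and the others for item `3m - 1`. -/
def valuedCell (m : ℕ) (hm : 3 ≤ m) : Fin (3 * m) ⊕ Fin (5 * m) → Fin (3 * m) × Fin (3 * m)
  | Sum.inl j => (j, j)
  | Sum.inr q =>
    if h : (q : ℕ) < 2 * m + 1 then (⟨3 * m - 2, by omega⟩, ⟨q, by omega⟩)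
    else (⟨3 * m - 1, by omega⟩, ⟨q - (2 * m + 1), by omega⟩)

/-- Here `3 ≤ m` matters: it makes `2m + 1 ≤ 3m - 2`, so that the diagonal cell of item `3m - 2` is
not among its cells of value `T`. -/
theorem valuedCell_injective (m : ℕ) (hm : 3 ≤ m) : Function.Injective (valuedCell m hm) := by
  rintro (j | q) (j' | q') h
  · exact congrArg Sum.inl (Prod.ext_iff.1 h).1
  · exfalso
    simp only [valuedCell] at h
    split_ifs at h <;> simp only [Prod.ext_iff, Fin.ext_iff] at h <;> omega
  · exfalso
    simp only [valuedCell] at h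
    split_ifs at h <;> simp only [Prod.ext_iff, Fin.ext_iff] at h <;> omega
  · have : (q : ℕ) = q' := by
      simp only [valuedCell] at h
      split_ifs at h <;> simp only [Prod.ext_iff, Fin.ext_iff] at h <;> omega
    rw [Fin.ext this]

/-- The first `3m` of the `6m` indices. -/
def low (m : ℕ) (j : Fin (3 * m)) : Fin (6 * m) := ⟨j, by omega⟩

/-- The agent who owns the valued cell `x` when `g` describes the allocation. -/
def owner (m : ℕ) (hm : 3 ≤ m) (g : Fin (6 * m) → Fin (6 * m) → Fin (6 * m))
    (x : Fin (3 * m) ⊕ Fin (5 * m)) : Fin (6 * m) :=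
  g (low m (valuedCell m hm x).1) (low m (valuedCell m hm x).2)

theorem agentVal_eq_owner (m T : ℕ) (hm : 3 ≤ m) (a : ℕ → ℕ)
    (v : Fin (6 * m) → Fin (6 * m) → Fin (6 * m) → ℕ)
    (hv : ∀ i j k, v i j k =
      if (j : ℕ) = (k : ℕ) ∧ (j : ℕ) < 3 * m then a (j : ℕ)
      else if (j : ℕ) = 3 * m - 2 ∧ (k : ℕ) < 2 * m + 1 then T
      else if (j : ℕ) = 3 * m - 1 ∧ (k : ℕ) < 3 * m - 1 then T
      else 0)
    (g : Fin (6 * m) → Fin (6 * m) → Fin (6 * m)) (i : Fin (6 * m)) :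
    agentVal v (allocOf g) i =
      (∑ j : Fin (3 * m), if owner m hm g (Sum.inl j) = i then a j else 0)
      + ∑ q : Fin (5 * m), if owner m hm g (Sum.inr q) = i then T else 0 := by
  rw [agentVal_allocOf]
  have key := Fintype.sum_of_injective
    (fun x => (low m (valuedCell m hm x).1, low m (valuedCell m hm x).2))
    (by
      intro x y h
      apply valuedCell_injective m hm
      simp only [low, Prod.ext_iff, Fin.ext_iff] at h ⊢
      exact h)
    (fun x => if owner m hm g x = i then Sum.elim (fun j : Fin (3 * m) => a j) (fun _ => T) x
      else 0)
    (fun p : Fin (6 * m) × Fin (6 * m) => if g p.1 p.2 = i then v i p.1 p.2 else 0)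
    (by
      rintro ⟨j, k⟩ hjk
      have hz : v i j k = 0 := by
        rw [hv]
        split_ifs with h1 h2 h3
        · exact absurd ⟨Sum.inl ⟨j, h1.2⟩, Prod.ext (Fin.ext rfl) (Fin.ext h1.1)⟩ hjk
        · have hc : valuedCell m hm (Sum.inr ⟨k, by omega⟩)
              = (⟨3 * m - 2, by omega⟩, ⟨k, by omega⟩) := dif_pos h2.2
          refine absurd ⟨Sum.inr ⟨k, by omega⟩, ?_⟩ hjk
          simp only [hc]
          exact Prod.ext (Fin.ext h2.1.symm) (Fin.ext rfl)
        · have hlt : ¬ (2 * m + 1 + (k : ℕ) < 2 * m + 1) := by omega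
          have hc : valuedCell m hm (Sum.inr ⟨2 * m + 1 + k, by omega⟩)
              = (⟨3 * m - 1, by omega⟩, ⟨2 * m + 1 + k - (2 * m + 1), by omega⟩) := dif_neg hlt
          refine absurd ⟨Sum.inr ⟨2 * m + 1 + k, by omega⟩, ?_⟩ hjk
          simp only [hc]
          exact Prod.ext (Fin.ext h3.1.symm) (Fin.ext (Nat.add_sub_cancel_left ..))
        · rfl
      simp [hz])
    (by
      intro x
      have hval : v i (low m (valuedCell m hm x).1) (low m (valuedCell m hm x).2)
          = Sum.elim (fun j : Fin (3 * m) => a j) (fun _ => T) x := by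
        rw [hv]
        rcases x with j | q
        · simp [valuedCell, low]
        · simp only [valuedCell, low, Sum.elim_inr]
          split_ifs <;> simp_all <;> omega
      exact if_congr Iff.rfl hval.symm rfl)
  rw [← key, Fintype.sum_sum_type]
  rfl

/-! ### The two directions of the reduction -/

/-- The total value is `m * T + 5m * T`, so if every one of the `6m` agents gets at least `T`, each
gets exactly `T`: the `5m` cells of value `T` go to distinct agents, and the diagonal cells go to the
other `m` agents, which form the triples. -/
theorem exists_partition_of_owners (m T : ℕ) (hT : 0 < T) (a : ℕ → ℕ)
    (ha_pos : ∀ j, j < 3 * m → 0 < a j)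
    (ha : ∀ j, j < 3 * m → T < 4 * a j ∧ 2 * a j < T)
    (hsum : ∑ j ∈ Finset.range (3 * m), a j = m * T)
    (d : Fin (3 * m) → Fin (6 * m)) (e : Fin (5 * m) → Fin (6 * m))
    (h : ∀ i, T ≤ (∑ j : Fin (3 * m), if d j = i then a j else 0)
      + ∑ q : Fin (5 * m), if e q = i then T else 0) :
    ∃ f : Fin (3 * m) → Fin m, ∀ i : Fin m,
        (Finset.univ.filter (fun j => f j = i)).card = 3 ∧
        ∑ j ∈ Finset.univ.filter (fun j => f j = i), a (j : ℕ) = T := by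
  have htot : ∑ _i : Fin (6 * m), T = ∑ i : Fin (6 * m),
      ((∑ j : Fin (3 * m), if d j = i then a j else 0)
        + ∑ q : Fin (5 * m), if e q = i then T else 0) := by
    rw [Finset.sum_add_distrib, Finset.sum_comm,
      Finset.sum_comm (f := fun i q => if e q = i then T else 0)]
    simp only [Finset.sum_ite_eq, Finset.mem_univ, if_true, Finset.sum_const, Finset.card_univ,
      Fintype.card_fin, smul_eq_mul]
    rw [Fin.sum_univ_eq_sum_range, hsum]
    ring
  have heq : ∀ i, T = (∑ j : Fin (3 * m), if d j = i then a j else 0)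
      + ∑ q : Fin (5 * m), if e q = i then T else 0 := fun i =>
    (Finset.sum_eq_sum_iff_of_le (fun i _ => h i)).1 htot i (Finset.mem_univ i)
  have hle : ∀ q, T ≤ ∑ q' : Fin (5 * m), if e q' = e q then T else 0 := by
    intro q
    have := Finset.single_le_sum (f := fun q' => if e q' = e q then T else 0)
      (fun _ _ => Nat.zero_le _) (Finset.mem_univ q)
    simpa using this
  have hinj : Function.Injective e := by
    intro q q' hq
    by_contra hne
    have h1 := Finset.sum_le_sum_of_subset (f := fun q'' => if e q'' = e q then T else 0)
      (Finset.subset_univ {q, q'})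
    rw [Finset.sum_pair hne] at h1
    simp only [hq, if_true] at h1
    have h2 := heq (e q')
    omega
  have hdisj : ∀ j, d j ∉ Set.range e := by
    rintro j ⟨q, hq⟩
    have h1 := Finset.single_le_sum (f := fun j' : Fin (3 * m) => if d j' = e q then a j' else 0)
      (fun _ _ => Nat.zero_le _) (Finset.mem_univ j)
    simp only [hq, if_true] at h1
    have h2 := heq (e q)
    have h3 := hle q
    have h4 := ha_pos j j.2
    rw [hq] at h2 h3
    omega
  have hcard : Nat.card ↑(Set.range e)ᶜ = m := by
    have h1 := Set.ncard_add_ncard_compl (Set.range e)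
    rw [← Set.image_univ, Set.ncard_image_of_injective _ hinj, Set.ncard_univ] at h1
    simp only [Nat.card_eq_fintype_card, Fintype.card_fin, Set.image_univ] at h1
    rw [Nat.card_coe_set_eq]
    omega
  let φ : ↑(Set.range e)ᶜ ≃ Fin m := Finite.equivFinOfCardEq hcard
  refine ⟨fun j => φ ⟨d j, hdisj j⟩, fun i => ?_⟩
  have hiff : ∀ j, φ ⟨d j, hdisj j⟩ = i ↔ d j = (φ.symm i : Fin (6 * m)) := by
    intro j
    rw [← Equiv.eq_symm_apply, Subtype.ext_iff]
  have hs : ∑ j ∈ Finset.univ.filter (fun j => φ ⟨d j, hdisj j⟩ = i), a (j : ℕ) = T := by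
    have h0 : (∑ q : Fin (5 * m), if e q = (φ.symm i : Fin (6 * m)) then T else 0) = 0 :=
      Finset.sum_eq_zero fun q _ => if_neg fun hq => (φ.symm i).2 ⟨q, hq⟩
    have h1 := heq (φ.symm i)
    rw [h0, add_zero] at h1
    rw [Finset.sum_filter]
    simp only [hiff]
    exact h1.symm
  refine ⟨?_, hs⟩
  set s := Finset.univ.filter (fun j => φ ⟨d j, hdisj j⟩ = i)
  have hne : s.Nonempty := by
    rw [Finset.nonempty_iff_ne_empty]
    rintro h
    rw [h] at hs
    simp at hs
    omega
  have h4 : s.card * T < 4 * T := by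
    have := Finset.sum_lt_sum_of_nonempty hne (fun (j : Fin (3 * m)) _ => (ha j j.2).1)
    rwa [← Finset.mul_sum, hs, Finset.sum_const, smul_eq_mul] at this
  have h2 : 2 * T < s.card * T := by
    have := Finset.sum_lt_sum_of_nonempty hne (fun (j : Fin (3 * m)) _ => (ha j j.2).2)
    rwa [← Finset.mul_sum, hs, Finset.sum_const, smul_eq_mul] at this
  have := Nat.lt_of_mul_lt_mul_right h4
  have := Nat.lt_of_mul_lt_mul_right h2
  omega

/-- Triples turned into a Latin square: agent `i < m` owns the diagonal cells of triple `i`, and agent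
`m + q` owns the `q`-th cell of value `T`. -/
theorem exists_latin_of_partition (m : ℕ) (hm : 3 ≤ m) (f : Fin (3 * m) → Fin m) :
    ∃ g : Fin (6 * m) → Fin (6 * m) → Fin (6 * m),
      (∀ j, Function.Injective (g j)) ∧ (∀ k, Function.Injective (fun j => g j k)) ∧
      (∀ j, (owner m hm g (Sum.inl j) : ℕ) = f j) ∧
      (∀ q, (owner m hm g (Sum.inr q) : ℕ) = m + q) := by
  let c : Fin (3 * m) ⊕ Fin (5 * m) → Fin (6 * m) :=
    Sum.elim (fun j => ⟨f j, by omega⟩) (fun q => ⟨m + q, by omega⟩)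
  have hinj := valuedCell_injective m hm
  obtain ⟨M, hM, hrow, hcol⟩ := exists_latin_of_partial (3 * m) (S := Fin (6 * m))
    (by rw [Fintype.card_fin]; omega) (Set.range (valuedCell m hm))
    (Function.extend (valuedCell m hm) c (fun _ => ⟨0, by omega⟩))
    (by
      rintro _ ⟨x, rfl⟩ _ ⟨y, rfl⟩ hne hline
      rw [hinj.extend_apply, hinj.extend_apply]
      rcases x with j | q <;> rcases y with j' | q'
      -- two diagonal cells never share a line
      · exact absurd (congrArg (fun j => valuedCell m hm (Sum.inl j)) (hline.elim id id)) hne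
      · simp only [c, Sum.elim_inl, Sum.elim_inr, ne_eq, Fin.ext_iff]
        omega
      · simp only [c, Sum.elim_inl, Sum.elim_inr, ne_eq, Fin.ext_iff]
        omega
      · intro e
        simp only [c, Sum.elim_inr, Fin.ext_iff] at e
        exact hne (by rw [show q = q' from Fin.ext (by omega)]))
  let φ : Fin (6 * m) ≃ Fin (3 * m) ⊕ Fin (3 * m) :=
    (finCongr (by omega)).trans finSumFinEquiv.symm
  have hφ : ∀ j, φ (low m j) = Sum.inl j := by
    intro j
    rw [← Equiv.eq_symm_apply]
    ext
    simp [φ, low]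
  have hown : ∀ x, owner m hm (fun j k => M (φ j) (φ k)) x = c x := by
    intro x
    simp only [owner, hφ]
    rw [hM _ ⟨x, rfl⟩, hinj.extend_apply]
  refine ⟨fun j k => M (φ j) (φ k), ?_, ?_, ?_, ?_⟩
  · intro j
    exact (hrow (φ j)).comp φ.injective
  · intro k
    exact (hcol (φ k)).comp φ.injective
  · intro j; rw [hown]; rfl
  · intro q; rw [hown]; rfl

/-- for the 3-Partition reduction instance of order `6m` (0-based
indexing as in the paper's 1-based description: `a l` for `l < 3m` is
`a_{l+1}`, paper item `3m-1` is index `3m-2`, paper item `3m` is index `3m-1`),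
a complete allocation with egalitarian social welfare at least `T` exists iff
`[3m]` can be partitioned into `m` triples each summing to `T` (encoded by
`f : Fin (3m) → Fin m` assigning each index to its triple). -/
theorem stmt_13 (m T : ℕ) (hm : 3 ≤ m) (hT : 0 < T) (a : ℕ → ℕ)
    (ha_pos : ∀ j, j < 3 * m → 0 < a j)
    (ha : ∀ j, j < 3 * m → T < 4 * a j ∧ 2 * a j < T)
    (hsum : ∑ j ∈ Finset.range (3 * m), a j = m * T)
    (v : Fin (6 * m) → Fin (6 * m) → Fin (6 * m) → ℕ)
    (hv : ∀ i j k, v i j k =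
      if (j : ℕ) = (k : ℕ) ∧ (j : ℕ) < 3 * m then a (j : ℕ)
      else if (j : ℕ) = 3 * m - 2 ∧ (k : ℕ) < 2 * m + 1 then T
      else if (j : ℕ) = 3 * m - 1 ∧ (k : ℕ) < 3 * m - 1 then T
      else 0) :
    (∃ A : Finset (Fin (6 * m) × Fin (6 * m) × Fin (6 * m)),
        IsCompleteAlloc (6 * m) A ∧ T ≤ ⨅ i, agentVal v A i) ↔
    (∃ f : Fin (3 * m) → Fin m, ∀ i : Fin m,
        (Finset.univ.filter (fun j => f j = i)).card = 3 ∧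
        ∑ j ∈ Finset.univ.filter (fun j => f j = i), a (j : ℕ) = T) := by
  have : Nonempty (Fin (6 * m)) := ⟨⟨0, by omega⟩⟩
  constructor
  · rintro ⟨A, hA, hmin⟩
    obtain ⟨g, rfl⟩ := exists_eq_allocOf hA
    refine exists_partition_of_owners m T hT a ha_pos ha hsum
      (fun j => owner m hm g (Sum.inl j)) (fun q => owner m hm g (Sum.inr q)) fun i => ?_
    rw [← agentVal_eq_owner m T hm a v hv]
    exact hmin.trans (ciInf_le (OrderBot.bddBelow _) i)
  · rintro ⟨f, hf⟩
    obtain ⟨g, hrow, hcol, hd, he⟩ := exists_latin_of_partition m hm f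
    refine ⟨allocOf g, isCompleteAlloc_allocOf g hrow hcol, le_ciInf fun i => ?_⟩
    rw [agentVal_eq_owner m T hm a v hv]
    by_cases hi : (i : ℕ) < m
    · refine le_add_right (le_of_eq ?_)
      rw [← (hf ⟨i, hi⟩).2, Finset.sum_filter]
      refine Finset.sum_congr rfl fun j _ => ?_
      simp only [Fin.ext_iff, hd]
    · refine le_add_left ?_
      have hq := Finset.single_le_sum
        (f := fun q : Fin (5 * m) => if owner m hm g (Sum.inr q) = i then T else 0)
        (fun _ _ => Nat.zero_le _) (Finset.mem_univ ⟨i - m, by omega⟩)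
      have hi' : owner m hm g (Sum.inr ⟨i - m, by omega⟩) = i := by
        rw [Fin.ext_iff, he]
        simp only
        omega
      simpa only [hi', if_true] using hq
end
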